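/- arXiv:2508.21383 — 2 statements merged into one kernel-verified Lean document; each statement's English description precedes it below -/
import Mathlib

section
/- Let G be a cyclic group of order n ≥ 3. Every zero-sum sequence A over G with ρ(L(A)) = n/2 has the form A = ∏_{g ∈ G₀} (gⁿ(−g)ⁿ)^{n_g}, where G₀ = {g ∈ G : ord(g) = n} is the set of generators and n_g ∈ ℕ₀. -/
def IsMinZS {G : Type*} [AddCommGroup G] (U : Multiset G) : Prop :=
  U ≠ 0 ∧ U.sum = 0 ∧ ∀ V ≤ U, V ≠ 0 → V.sum = 0 → V = U

noncomputable def DavC (G : Type*) [AddCommGroup G] : ℕ :=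
  sSup {n | ∃ U : Multiset G, IsMinZS U ∧ U.card = n}

def LSet {G : Type*} [AddCommGroup G] (A : Multiset G) : Set ℕ :=
  {k | ∃ l : Multiset (Multiset G), l.card = k ∧ (∀ U ∈ l, IsMinZS U) ∧ l.sum = A}

noncomputable def rhoSet (L : Set ℕ) : ℚ := ((sSup L : ℕ) : ℚ) / ((sInf L : ℕ) : ℚ)

def IsIntervalSet (L : Set ℕ) : Prop := L.Nonempty ∧ L = Set.Icc (sInf L) (sSup L)

/-! A minimal zero-sum sequence other than `0` has length between `2` and the Davenport constant
`D(G) ≤ n`, so comparing lengths gives `ρ(L(A)) ≤ n / 2`, with equality only if `0 ∤ A` and `A` has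
one factorization into sequences of length `2` and another into sequences of length `n`. The first
makes `A` invariant under negation. The second makes `A` a product of powers `gⁿ` with `ord g = n`:
if a minimal zero-sum sequence has length `n`, its partial sums exhaust `G`, which forces all of its
terms to be equal. -/

theorem forall_eq_of_sum_map_eq {α M : Type*} [AddCommMonoid M] [PartialOrder M]
    [IsOrderedCancelAddMonoid M] {s : Multiset α} {f g : α → M} (hle : ∀ a ∈ s, f a ≤ g a)
    (hsum : (s.map f).sum = (s.map g).sum) : ∀ a ∈ s, f a = g a := by
  by_contra! ⟨a, ha, hne⟩
  exact (Multiset.sum_lt_sum hle ⟨a, ha, (hle a ha).lt_of_ne hne⟩).ne hsum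

section Factorization

variable {G : Type*} [AddCommGroup G] {U V : Multiset G}

namespace IsMinZS

theorem sum_ne_zero_of_lt (hU : IsMinZS U) (hVU : V < U) (hV : V ≠ 0) : V.sum ≠ 0 :=
  fun hsum ↦ hVU.ne (hU.2.2 V hVU.le hV hsum)

theorem eq_singleton_zero (hU : IsMinZS U) (h : (0 : G) ∈ U) : U = {0} :=
  (hU.2.2 {0} (Multiset.singleton_le.2 h) (Multiset.singleton_ne_zero 0)
    (Multiset.sum_singleton 0)).symm

theorem two_le_card (hU : IsMinZS U) (h : (0 : G) ∉ U) : 2 ≤ U.card := by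
  have hpos : 0 < U.card := Multiset.card_pos.2 hU.1
  have hne : U.card ≠ 1 := fun h1 ↦ by
    obtain ⟨x, rfl⟩ := Multiset.card_eq_one.1 h1
    exact h (by simpa [eq_comm] using hU.2.1)
  lia

theorem two_le_card_add_count_zero [DecidableEq G] (hU : IsMinZS U) :
    2 ≤ U.card + U.count 0 := by
  by_cases h : (0 : G) ∈ U
  · simp [hU.eq_singleton_zero h]
  · exact (hU.two_le_card h).trans (Nat.le_add_right _ _)

theorem card_add_mul_count_zero_le [DecidableEq G] {d : ℕ} (hU : IsMinZS U) (hd : U.card ≤ d) :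
    U.card + d * U.count 0 ≤ d + U.count 0 := by
  by_cases h : (0 : G) ∈ U
  · simp [hU.eq_singleton_zero h, add_comm]
  · simpa [Multiset.count_eq_zero_of_notMem h] using hd

theorem map_neg_of_card_eq_two (hU : IsMinZS U) (h : U.card = 2) : U.map Neg.neg = U := by
  obtain ⟨x, y, rfl⟩ := Multiset.card_eq_two.1 h
  have hy : -x = y := neg_eq_of_add_eq_zero_right (by simpa using hU.2.1)
  simpa [← hy] using Multiset.pair_comm (-x) x

theorem addOrderOf_of_replicate {k : ℕ} {g : G} (h : IsMinZS (Multiset.replicate k g)) :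
    addOrderOf g = k := by
  have hk : 0 < k := by simpa using Multiset.card_pos.2 h.1
  have hkg : k • g = 0 := by simpa using h.2.1
  have hpos : addOrderOf g ≠ 0 :=
    (addOrderOf_pos_iff.2 (isOfFinAddOrder_iff_nsmul_eq_zero.2 ⟨k, hk, hkg⟩)).ne'
  have heq := h.2.2 (Multiset.replicate (addOrderOf g) g)
    ((Multiset.replicate_le_replicate g).2 (addOrderOf_le_of_nsmul_eq_zero hk hkg))
    (by simpa [← Multiset.card_eq_zero] using hpos)
    (by simp [addOrderOf_nsmul_eq_zero])
  simpa using congrArg Multiset.card heq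

theorem injective_sum_take {L : List G} (hL : IsMinZS (L : Multiset G)) :
    Function.Injective fun i : Fin L.length ↦ (L.take i).sum := by
  refine Function.Injective.of_lt_imp_ne fun i j hij heq ↦ ?_
  obtain ⟨d, hd⟩ := Nat.exists_eq_add_of_lt hij
  let block := (L.drop i).take (d + 1)
  have hlen : block.length = d + 1 := by simp [block]; lia
  have hsum : (block : Multiset G).sum = 0 := by
    simpa [hd, add_assoc, List.take_add, block] using heq
  have hle : (block : Multiset G) ≤ L :=
    Multiset.coe_le.2 ((List.take_sublist _ _).trans (List.drop_sublist _ _)).subperm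
  have hlt : (block : Multiset G) < L := hle.lt_of_ne fun h ↦ by
    have : block.length = L.length := by simpa using congrArg Multiset.card h
    lia
  exact hL.sum_ne_zero_of_lt hlt (fun h ↦ by simp_all) hsum

variable [Fintype G]

theorem card_le_fintypeCard (hU : IsMinZS U) : U.card ≤ Fintype.card G := by
  induction U using Quotient.inductionOn with
  | h L => simpa using Fintype.card_le_of_injective _ hU.injective_sum_take

theorem eq_of_cons_cons_of_card_eq {a b : G} (hU : IsMinZS (a ::ₘ b ::ₘ V))
    (hcard : (a ::ₘ b ::ₘ V).card = Fintype.card G) : a = b := by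
  induction V using Quotient.inductionOn with
  | h T =>
    let L := a :: b :: T
    have hL : IsMinZS (L : Multiset G) := hU
    have hbij : Function.Bijective fun i : Fin L.length ↦ (L.take i).sum :=
      (Fintype.bijective_iff_injective_and_card _).2
        ⟨hL.injective_sum_take, by simpa [L] using hcard⟩
    obtain ⟨⟨i, hi⟩, hb⟩ := hbij.surjective b
    match i with
    | 0 =>
      have hb0 : b = 0 := by simpa using hb.symm
      have hL0 := congrArg Multiset.card (hL.eq_singleton_zero (by simp [L, hb0]))
      simp [L] at hL0
    | 1 => simpa [L] using hb
    | j + 2 =>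
      -- Cancel `b` from both sides of `a + (b + (T.take j).sum) = b`.
      have hsum : ((a :: T.take j : List G) : Multiset G).sum = 0 := by
        simpa [L, add_left_comm a b] using hb
      have hlt : ((a :: T.take j : List G) : Multiset G) < (L : Multiset G) :=
        (Multiset.cons_lt_cons_iff (a := a)).2 <| lt_of_le_of_lt
          (Multiset.coe_le.2 (List.take_sublist j T).subperm) (Multiset.lt_cons_self _ b)
      exact absurd hsum (hL.sum_ne_zero_of_lt hlt (by simp))

theorem exists_eq_replicate_of_card_eq (hU : IsMinZS U) (hcard : U.card = Fintype.card G) :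
    ∃ g : G, addOrderOf g = Fintype.card G ∧ U = Multiset.replicate (Fintype.card G) g := by
  obtain ⟨g, hg⟩ := Multiset.exists_mem_of_ne_zero hU.1
  have hrep : U = Multiset.replicate (Fintype.card G) g := by
    refine Multiset.eq_replicate.2 ⟨hcard, fun b hb ↦ ?_⟩
    obtain ⟨V, rfl⟩ := Multiset.exists_cons_of_mem hg
    rcases Multiset.mem_cons.1 hb with hbg | hbV
    · exact hbg
    · obtain ⟨W, rfl⟩ := Multiset.exists_cons_of_mem hbV
      exact (hU.eq_of_cons_cons_of_card_eq hcard).symm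
  exact ⟨g, addOrderOf_of_replicate (hrep ▸ hU), hrep⟩

end IsMinZS

/-- `l` is a factorization of the sequence `A` in the monoid of zero-sum sequences, whose atoms are
the minimal zero-sum sequences. Factorizations are unordered and list their factors with
multiplicity, so the length of `l` is `l.card`. -/
structure IsFactorization (l : Multiset (Multiset G)) (A : Multiset G) : Prop where
  isMinZS : ∀ U ∈ l, IsMinZS U
  sum_eq : l.sum = A

namespace IsFactorization

variable {A : Multiset G} {l l₁ l₂ : Multiset (Multiset G)}

theorem card_eq (h : IsFactorization l A) : A.card = (l.map Multiset.card).sum :=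
  h.sum_eq ▸ Multiset.card_join l

theorem count_eq [DecidableEq G] (h : IsFactorization l A) (g : G) :
    A.count g = (l.map (Multiset.count g)).sum :=
  h.sum_eq ▸ map_multiset_sum (Multiset.countAddMonoidHom g) l

theorem mem_iff (h : IsFactorization l A) {g : G} : g ∈ A ↔ ∃ U ∈ l, g ∈ U :=
  h.sum_eq ▸ Multiset.mem_join

theorem two_mul_card_le [DecidableEq G] (h : IsFactorization l A) :
    2 * l.card ≤ A.card + A.count 0 := by
  rw [h.card_eq, h.count_eq, ← Multiset.sum_map_add, mul_comm]
  simpa using Multiset.sum_map_le_sum_map (fun _ ↦ 2) (fun U ↦ U.card + U.count 0)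
    fun U hU ↦ (h.isMinZS U hU).two_le_card_add_count_zero

theorem card_add_mul_count_zero_le [DecidableEq G] {d : ℕ} (h : IsFactorization l A)
    (hd : ∀ U ∈ l, U.card ≤ d) : A.card + d * A.count 0 ≤ d * l.card + A.count 0 := by
  rw [h.card_eq, h.count_eq, ← Multiset.sum_map_mul_left, ← Multiset.sum_map_add, mul_comm d]
  simpa using Multiset.sum_map_le_sum_map (fun U ↦ U.card + d * U.count 0)
    (fun U ↦ d + U.count 0) fun U hU ↦ (h.isMinZS U hU).card_add_mul_count_zero_le (hd U hU)

theorem forall_card_eq_of_two_mul_card_eq {d : ℕ} (hd : 3 ≤ d) (h₁ : IsFactorization l₁ A)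
    (h₂ : IsFactorization l₂ A) (hle : ∀ U ∈ l₂, U.card ≤ d)
    (hcard : 2 * l₁.card = d * l₂.card) :
    (∀ U ∈ l₁, U.card = 2) ∧ ∀ U ∈ l₂, U.card = d := by
  classical
  have hlower := h₁.two_mul_card_le
  have hupper := h₂.card_add_mul_count_zero_le hle
  have hcount : A.count 0 = 0 := by
    have hmul : 3 * A.count 0 ≤ d * A.count 0 := Nat.mul_le_mul_right _ hd
    lia
  have hzero : ∀ U ∈ l₁, (0 : G) ∉ U := fun U hU h0 ↦
    Multiset.count_eq_zero.1 hcount (h₁.mem_iff.2 ⟨U, hU, h0⟩)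
  rw [hcount] at hlower hupper
  constructor
  · refine fun U hU ↦ (forall_eq_of_sum_map_eq (f := fun _ ↦ 2)
      (fun V hV ↦ (h₁.isMinZS V hV).two_le_card (hzero V hV)) ?_ U hU).symm
    rw [← h₁.card_eq, Multiset.map_const', Multiset.sum_replicate, smul_eq_mul]
    lia
  · refine forall_eq_of_sum_map_eq (g := fun _ ↦ d) hle ?_
    rw [← h₂.card_eq, Multiset.map_const', Multiset.sum_replicate, smul_eq_mul]
    lia

theorem map_neg_eq (h : IsFactorization l A) (hl : ∀ U ∈ l, U.card = 2) :
    A.map Neg.neg = A := by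
  have hmap : l.map (Multiset.map Neg.neg) = l :=
    (Multiset.map_congr rfl fun U hU ↦
      (h.isMinZS U hU).map_neg_of_card_eq_two (hl U hU)).trans (Multiset.map_id' l)
  calc A.map Neg.neg = l.sum.map Neg.neg := by rw [h.sum_eq]
    _ = (l.map (Multiset.map Neg.neg)).sum := map_multiset_sum (Multiset.mapAddMonoidHom Neg.neg) l
    _ = A := by rw [hmap, h.sum_eq]

theorem dvd_count [DecidableEq G] {n : ℕ} (h : IsFactorization l A)
    (hl : ∀ U ∈ l, ∃ g, U = Multiset.replicate n g) (g : G) : n ∣ A.count g := by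
  rw [h.count_eq]
  refine Multiset.dvd_sum fun k hk ↦ ?_
  obtain ⟨U, hU, rfl⟩ := Multiset.mem_map.1 hk
  obtain ⟨x, rfl⟩ := hl U hU
  rw [Multiset.count_replicate]
  split_ifs <;> simp

theorem exists_card_eq_rhoSet_mul_card (h : rhoSet (LSet A) ≠ 0) :
    ∃ l₁ l₂, IsFactorization l₁ A ∧ IsFactorization l₂ A ∧
      (l₁.card : ℚ) = rhoSet (LSet A) * l₂.card := by
  classical
  -- `rhoSet ∅ = 0` by the junk values `sInf ∅ = 0` and `x / 0 = 0`, so `LSet A` is nonempty.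
  have hinf : ((sInf (LSet A) : ℕ) : ℚ) ≠ 0 := (div_ne_zero_iff.1 h).2
  have hne : (LSet A).Nonempty :=
    Nat.nonempty_of_pos_sInf (Nat.pos_of_ne_zero (Nat.cast_ne_zero.1 hinf))
  have hbdd : BddAbove (LSet A) := by
    refine ⟨A.card + A.count 0, ?_⟩
    rintro _ ⟨l, rfl, hl, hlA⟩
    have := two_mul_card_le ⟨hl, hlA⟩
    lia
  obtain ⟨l₁, hmax, hl₁, hA₁⟩ := Nat.sSup_mem hne hbdd
  obtain ⟨l₂, hmin, hl₂, hA₂⟩ := Nat.sInf_mem hne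
  refine ⟨l₁, l₂, ⟨hl₁, hA₁⟩, ⟨hl₂, hA₂⟩, ?_⟩
  rw [hmax, hmin, rhoSet, div_mul_cancel₀ _ hinf]

end IsFactorization

theorem ne_neg_of_three_le_addOrderOf {g : G} (hg : 3 ≤ addOrderOf g) : g ≠ -g := fun h ↦ by
  have h2 : 2 • g = 0 := by rw [two_nsmul, ← eq_neg_iff_add_eq_zero, ← h]
  have := addOrderOf_le_of_nsmul_eq_zero two_pos h2
  lia

theorem count_neg_of_map_neg_eq [DecidableEq G] {A : Multiset G} (hA : A.map Neg.neg = A) (g : G) :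
    A.count (-g) = A.count g := by
  conv_lhs => rw [← hA]
  exact Multiset.count_map_eq_count' _ _ neg_injective g

theorem count_sum_nsmul_replicate_add_replicate_neg [Fintype G] [DecidableEq G] (m : G → ℕ)
    (n : ℕ) (g : G) :
    (∑ h, m h • (Multiset.replicate n h + Multiset.replicate n (-h))).count g =
      m g * n + m (-g) * n := by
  simp [Multiset.count_sum', Multiset.count_replicate, Finset.sum_add_distrib,
    neg_eq_iff_eq_neg]

theorem exists_eq_sum_nsmul_replicate_add_replicate_neg [Fintype G] [DecidableEq G] {n : ℕ}
    {A : Multiset G} (hneg : A.map Neg.neg = A) (hne : ∀ g ∈ A, g ≠ -g)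
    (hdvd : ∀ g, n ∣ A.count g) :
    ∃ m : G → ℕ, (∀ g, m g ≠ 0 → g ∈ A) ∧
      A = ∑ g, m g • (Multiset.replicate n g + Multiset.replicate n (-g)) := by
  -- An arbitrary linear order on `G` selects one element of each pair `{g, -g}`.
  let e := Fintype.equivFin G
  refine ⟨fun g ↦ if e g < e (-g) then A.count g / n else 0, fun g hg ↦ ?_, ?_⟩
  · by_contra hgA
    simp [Multiset.count_eq_zero_of_notMem hgA] at hg
  · ext g
    rw [count_sum_nsmul_replicate_add_replicate_neg]
    simp only [neg_neg, count_neg_of_map_neg_eq hneg]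
    by_cases hg : g ∈ A
    · rcases (e.injective.ne (hne g hg)).lt_or_gt with h | h <;>
        simp [h, h.asymm, Nat.div_mul_cancel (hdvd g)]
    · simp [Multiset.count_eq_zero_of_notMem hg]

end Factorization

theorem stmt5 {G : Type*} [AddCommGroup G] [Fintype G] (n : ℕ) (hn : 3 ≤ n)
    (hcyc : IsAddCyclic G) (hcard : Fintype.card G = n)
    (A : Multiset G) (hA : A.sum = 0)
    (hrho : rhoSet (LSet A) = (n : ℚ) / 2) :
    ∃ m : G → ℕ, (∀ g : G, m g ≠ 0 → addOrderOf g = n) ∧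
      A = ∑ g : G, m g • (Multiset.replicate n g + Multiset.replicate n (-g)) := by
  classical
  subst hcard
  obtain ⟨l₁, l₂, h₁, h₂, hratio⟩ :=
    IsFactorization.exists_card_eq_rhoSet_mul_card (A := A) (by rw [hrho]; positivity)
  have hlen : 2 * l₁.card = Fintype.card G * l₂.card := by
    rw [hrho] at hratio
    field_simp at hratio
    rw [mul_comm]
    exact_mod_cast hratio
  obtain ⟨hl₁, hl₂⟩ := h₁.forall_card_eq_of_two_mul_card_eq hn h₂
    (fun U hU ↦ (h₂.isMinZS U hU).card_le_fintypeCard) hlen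
  have hpow := fun U hU ↦ (h₂.isMinZS U hU).exists_eq_replicate_of_card_eq (hl₂ U hU)
  have hord : ∀ g ∈ A, addOrderOf g = Fintype.card G := fun g hg ↦ by
    obtain ⟨U, hU, hgU⟩ := h₂.mem_iff.1 hg
    obtain ⟨x, hx, rfl⟩ := hpow U hU
    rwa [Multiset.eq_of_mem_replicate hgU]
  obtain ⟨m, hm, hsum⟩ := exists_eq_sum_nsmul_replicate_add_replicate_neg (h₁.map_neg_eq hl₁)
    (fun g hg ↦ ne_neg_of_three_le_addOrderOf (hn.trans_eq (hord g hg).symm))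
    (h₂.dvd_count fun U hU ↦ (hpow U hU).imp fun _ ↦ And.right)
  exact ⟨m, fun g hg ↦ hord g (hm g hg), hsum⟩
end

section
/- Let G be a finite abelian group with |G| ≥ 3 satisfying Property P. Then for every n, every zero-sum sequence counted below in the numerator is also counted in the denominator, and lim_{n→∞} |{A ∈ B_ρ(G) : L(A) is an interval and n ∈ L_{B_ρ(G)}(A)}| / |{A ∈ B_ρ(G) : n ∈ L_{B_ρ(G)}(A)}| = 1. -/
def PropertyP (G : Type*) [AddCommGroup G] : Prop :=
  ∃ (g₁ g₂ : G) (U₁ U₂ : Multiset G),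
    IsMinZS U₁ ∧ IsMinZS U₂ ∧ U₁.card = DavC G ∧ U₂.card = DavC G ∧
    ({g₁, g₂} : Multiset G) ≤ U₁ ∧ (g₁ + g₂) ∈ U₂

def Brho (G : Type*) [AddCommGroup G] : Set (Multiset G) :=
  {A | A.sum = 0 ∧ (A = 0 ∨ rhoSet (LSet A) = (DavC G : ℚ) / 2)}

def IsAtomBrho {G : Type*} [AddCommGroup G] (U : Multiset G) : Prop :=
  U ∈ Brho G ∧ U ≠ 0 ∧ ∀ V ∈ Brho G, ∀ W ∈ Brho G, U = V + W → V = 0 ∨ W = 0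

def LSetB {G : Type*} [AddCommGroup G] (A : Multiset G) : Set ℕ :=
  {k | ∃ l : Multiset (Multiset G), l.card = k ∧ (∀ U ∈ l, IsAtomBrho U) ∧ l.sum = A}

/-!
By counting terms, a sequence `A` lies in `B_ρ(G)` iff it has both a factorization into minimal
zero-sum sequences of length `D(G)` and one into minimal zero-sum sequences of length `2`, that is,
iff both `|A| / D(G)` and `|A| / 2` are lengths of `A`. This exhibits `B_ρ(G)` as the image of the
equalizer of two homomorphisms between free abelian monoids, so `B_ρ(G)` is finitely generated and
its set `Ω` of atoms is finite. The denominator then counts the `n`-fold sumset `nΩ`, and `|nΩ|` is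
eventually polynomial in `n` by Khovanskii's theorem; in particular `|nΩ| / |(n + m)Ω|` tends to
`1` for every `m`. Hence it suffices to find a single `X ∈ B_ρ(G)` such that every `X + A` with
`A ∈ B_ρ(G)` has an interval as its set of lengths: translation by `X` embeds `nΩ` into the
numerator at `n + m`, where `m` is a length of `X` in `B_ρ(G)`.

With `U₁` and `U₂` as in Property P, the sequence `V = U₁ + U₂ - U₁ - U₂` has extreme lengths `4`
and `2 D(G)`, and Property P makes `5` and `2 D(G) - 1` lengths too. This is enough for the set of
lengths of a large multiple `X` of `V` to be an interval. If this interval is longer than the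
lengths of the finitely many atoms of `B_ρ(G)`, adding atoms to `X` creates no gaps.
-/

section EventuallyPolynomial

open Polynomial Filter

/-- A counting function `a : ℕ → ℕ` which agrees with a polynomial at all large arguments.
The coefficients are taken in `ℝ`, since they are in general not integral. -/
def EventuallyPolynomial (a : ℕ → ℕ) : Prop :=
  ∃ p : ℝ[X], ∀ᶠ n : ℕ in atTop, (a n : ℝ) = p.eval (n : ℝ)

theorem EventuallyPolynomial.of_eventually_eq {a b : ℕ → ℕ} (hb : EventuallyPolynomial b)
    (h : ∀ᶠ n in atTop, a n = b n) : EventuallyPolynomial a := by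
  obtain ⟨p, hp⟩ := hb
  refine ⟨p, ?_⟩
  filter_upwards [h, hp] with n hn hpn
  rw [hn, hpn]

theorem EventuallyPolynomial.of_eventually_add_eq_add {a b c d : ℕ → ℕ}
    (hb : EventuallyPolynomial b) (hc : EventuallyPolynomial c) (hd : EventuallyPolynomial d)
    (h : ∀ᶠ n in atTop, a n + b n = c n + d n) : EventuallyPolynomial a := by
  obtain ⟨p, hp⟩ := hb
  obtain ⟨q, hq⟩ := hc
  obtain ⟨r, hr⟩ := hd
  refine ⟨q + r - p, ?_⟩
  filter_upwards [h, hp, hq, hr] with n hn hpn hqn hrn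
  rw [eval_sub, eval_add, ← hpn, ← hqn, ← hrn, eq_sub_iff_add_eq]
  exact_mod_cast hn

theorem eventuallyPolynomial_zero : EventuallyPolynomial 0 :=
  ⟨0, by simp⟩

theorem tendsto_polynomial_eval_div_eval_add {p : ℝ[X]} (hp : p ≠ 0) (c : ℝ) :
    Tendsto (fun x => p.eval x / p.eval (x + c)) atTop (nhds 1) := by
  have h := div_tendsto_atTop_leadingCoeff_div_of_degree_eq p (taylor c p)
    (degree_taylor p c).symm
  rw [leadingCoeff_taylor, div_self (leadingCoeff_ne_zero.mpr hp)] at h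
  simpa only [taylor_eval, add_comm] using h

theorem EventuallyPolynomial.tendsto_div_shift {a : ℕ → ℕ} (ha : EventuallyPolynomial a)
    (hpos : ∀ n, 0 < a n) (m : ℕ) :
    Tendsto (fun n => (a n : ℝ) / a (n + m)) atTop (nhds 1) := by
  obtain ⟨p, hp⟩ := ha
  have hp0 : p ≠ 0 := by
    rintro rfl
    obtain ⟨n, hn⟩ := hp.exists
    exact (hpos n).ne' (by simpa using hn)
  refine ((tendsto_polynomial_eval_div_eval_add hp0 m).comp
    tendsto_natCast_atTop_atTop).congr' ?_
  filter_upwards [hp, (tendsto_add_atTop_nat m).eventually hp] with n hn hnm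
  simp only [Function.comp_apply, hn, hnm, Nat.cast_add]

end EventuallyPolynomial

section SimplexSlice

open Set Filter

variable {ι : Type*} [Fintype ι]

/-- The slice of `S ⊆ ℕ^ι` by the simplex of vectors with coordinate sum `n`. -/
def simplexSlice (S : Set (ι → ℕ)) (n : ℕ) : Set (ι → ℕ) :=
  {x ∈ S | ∑ i, x i = n}

theorem simplexSlice_univ_eq_piAntidiag [DecidableEq ι] (n : ℕ) :
    simplexSlice univ n = (↑(Finset.piAntidiag (Finset.univ : Finset ι) n) : Set (ι → ℕ)) := by
  ext x
  simp [simplexSlice]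

theorem finite_simplexSlice (S : Set (ι → ℕ)) (n : ℕ) : (simplexSlice S n).Finite := by
  classical
  have hsub : simplexSlice S n ⊆ simplexSlice univ n := fun x hx => ⟨mem_univ x, hx.2⟩
  rw [simplexSlice_univ_eq_piAntidiag] at hsub
  exact (Finset.finite_toSet _).subset hsub

theorem ncard_simplexSlice_univ (n : ℕ) :
    (simplexSlice (univ : Set (ι → ℕ)) n).ncard = (Fintype.card ι).multichoose n := by
  classical
  rw [simplexSlice_univ_eq_piAntidiag, ncard_coe_finset, ← Finset.map_sym_eq_piAntidiag,
    Finset.card_map, Finset.sym_univ, Finset.card_univ, Sym.card_sym_eq_multichoose]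

theorem eventuallyPolynomial_multichoose_sub (k s : ℕ) :
    EventuallyPolynomial fun n => k.multichoose (n - s) := by
  cases k with
  | zero =>
    refine eventuallyPolynomial_zero.of_eventually_eq ?_
    filter_upwards [eventually_gt_atTop s] with n hn
    obtain ⟨j, hj⟩ := Nat.exists_eq_succ_of_ne_zero (Nat.sub_ne_zero_of_lt hn)
    rw [hj, Nat.multichoose_zero_succ, Pi.zero_apply]
  | succ k =>
    refine ⟨Polynomial.preHilbertPoly ℝ k s, ?_⟩
    filter_upwards [eventually_ge_atTop s] with n hn
    rw [Polynomial.preHilbertPoly_eq_choose_sub_add ℝ k hn, Nat.multichoose_eq,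
      show k + 1 + (n - s) - 1 = n - s + k by omega, Nat.choose_symm_add]

theorem simplexSlice_Ici (f : ι → ℕ) {n : ℕ} (hn : ∑ i, f i ≤ n) :
    simplexSlice (Ici f) n = (f + ·) '' simplexSlice univ (n - ∑ i, f i) := by
  ext x
  constructor
  · rintro ⟨hfx, hx⟩
    obtain ⟨z, rfl⟩ := exists_add_of_le (mem_Ici.mp hfx)
    simp only [Pi.add_apply, Finset.sum_add_distrib] at hx
    exact ⟨z, ⟨mem_univ z, by omega⟩, rfl⟩
  · rintro ⟨z, ⟨-, hz⟩, rfl⟩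
    refine ⟨mem_Ici.mpr le_self_add, ?_⟩
    simp only [Pi.add_apply, Finset.sum_add_distrib]
    omega

theorem eventuallyPolynomial_simplexSlice_Ici (f : ι → ℕ) :
    EventuallyPolynomial fun n => (simplexSlice (Ici f) n).ncard := by
  refine (eventuallyPolynomial_multichoose_sub (Fintype.card ι) (∑ i, f i)).of_eventually_eq ?_
  filter_upwards [eventually_ge_atTop (∑ i, f i)] with n hn
  rw [simplexSlice_Ici f hn, ncard_image_of_injective _ (add_right_injective f),
    ncard_simplexSlice_univ]

theorem EventuallyPolynomial.simplexSlice_union {S T : Set (ι → ℕ)}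
    (hS : EventuallyPolynomial fun n => (simplexSlice S n).ncard)
    (hT : EventuallyPolynomial fun n => (simplexSlice T n).ncard)
    (hST : EventuallyPolynomial fun n => (simplexSlice (S ∩ T) n).ncard) :
    EventuallyPolynomial fun n => (simplexSlice (S ∪ T) n).ncard := by
  refine hST.of_eventually_add_eq_add hS hT (.of_forall fun n => ?_)
  have hunion : simplexSlice (S ∪ T) n = simplexSlice S n ∪ simplexSlice T n :=
    union_inter_distrib_right S T _
  have hinter : simplexSlice (S ∩ T) n = simplexSlice S n ∩ simplexSlice T n :=
    inter_inter_distrib_right S T _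
  rw [hunion, hinter]
  exact ncard_union_add_ncard_inter _ _ (finite_simplexSlice ..) (finite_simplexSlice ..)

theorem EventuallyPolynomial.simplexSlice_compl {S : Set (ι → ℕ)}
    (hS : EventuallyPolynomial fun n => (simplexSlice S n).ncard) :
    EventuallyPolynomial fun n => (simplexSlice Sᶜ n).ncard := by
  have huniv : EventuallyPolynomial fun n => (simplexSlice (Ici (0 : ι → ℕ)) n).ncard :=
    eventuallyPolynomial_simplexSlice_Ici 0
  refine hS.of_eventually_add_eq_add huniv eventuallyPolynomial_zero (.of_forall fun n => ?_)
  have hdisj : Disjoint (simplexSlice Sᶜ n) (simplexSlice S n) :=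
    disjoint_compl_left.mono (sep_subset _ _) (sep_subset _ _)
  rw [← ncard_union_eq hdisj (finite_simplexSlice ..) (finite_simplexSlice ..),
    Pi.zero_apply, add_zero]
  congr 1
  ext x
  simp only [simplexSlice, mem_union, mem_ofPred_eq, mem_compl_iff, mem_Ici, zero_le, true_and]
  tauto

/-- The upper closure is intersected with an arbitrary `Ici f` to make the induction on `F`
go through: inclusion–exclusion brings in intersections of orthants, which are again orthants. -/
theorem eventuallyPolynomial_simplexSlice_upperClosure_inter_Ici (F : Finset (ι → ℕ))
    (f : ι → ℕ) :
    EventuallyPolynomial fun n =>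
      (simplexSlice (↑(upperClosure (F : Set (ι → ℕ))) ∩ Ici f) n).ncard := by
  classical
  induction F using Finset.induction_on generalizing f with
  | empty => exact eventuallyPolynomial_zero.of_eventually_eq (by simp [simplexSlice])
  | insert g F _ ih =>
    rw [Finset.coe_insert, insert_eq, upperClosure_union, upperClosure_singleton,
      UpperSet.coe_inf, UpperSet.coe_Ici, union_inter_distrib_right, Ici_inter_Ici]
    refine (eventuallyPolynomial_simplexSlice_Ici (g ⊔ f)).simplexSlice_union (ih f) ?_
    convert ih (g ⊔ f) using 4
    rw [inter_comm, inter_assoc, Ici_inter_Ici, sup_comm f, sup_assoc, sup_idem]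

theorem upperClosure_setOf_minimal {α : Type*} [PartialOrder α] [WellFoundedLT α] {S : Set α}
    (hS : IsUpperSet S) : (upperClosure {x | Minimal (· ∈ S) x} : Set α) = S := by
  refine Subset.antisymm (fun x ⟨m, hm, hmx⟩ => hS hmx hm.prop) fun x hx => ?_
  obtain ⟨m, hmx, hm⟩ := exists_minimal_le_of_wellFoundedLT (· ∈ S) x hx
  exact ⟨m, hm, hmx⟩

theorem eventuallyPolynomial_simplexSlice_of_isUpperSet {S : Set (ι → ℕ)} (hS : IsUpperSet S) :
    EventuallyPolynomial fun n => (simplexSlice S n).ncard := by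
  have hfin : {x | Minimal (· ∈ S) x}.Finite :=
    WellQuasiOrderedLE.finite_of_isAntichain (setOfPred_minimal_antichain _)
  have h := eventuallyPolynomial_simplexSlice_upperClosure_inter_Ici hfin.toFinset 0
  rw [Finite.coe_toFinset, upperClosure_setOf_minimal hS] at h
  simpa only [Ici_bot, ← bot_eq_zero, inter_univ] using h

end SimplexSlice

section Khovanskii

open Set Filter

open scoped Pointwise

variable {ι M : Type*}

/-- The vectors whose value under `φ` is attained by a lexicographically smaller vector with the
same coordinate sum. The remaining vectors are canonical representatives for the values of `φ`
on every simplex slice. -/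
def lexRedundant [Fintype ι] [LinearOrder ι] [AddCommMonoid M] (φ : (ι → ℕ) →+ M) :
    Set (ι → ℕ) :=
  {x | ∃ y, toLex y < toLex x ∧ ∑ i, y i = ∑ i, x i ∧ φ y = φ x}

theorem isUpperSet_lexRedundant [Fintype ι] [LinearOrder ι] [AddCommMonoid M]
    (φ : (ι → ℕ) →+ M) : IsUpperSet (lexRedundant φ) := by
  rintro x _ hle ⟨y, hlt, hsum, hφ⟩
  obtain ⟨z, rfl⟩ := exists_add_of_le hle
  exact ⟨y + z, add_lt_add_left (α := Lex (ι → ℕ)) hlt (toLex z),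
    by simp only [Pi.add_apply, Finset.sum_add_distrib, hsum], by rw [map_add, map_add, hφ]⟩

theorem bijOn_simplexSlice_compl_lexRedundant [Fintype ι] [LinearOrder ι] [AddCommMonoid M]
    (φ : (ι → ℕ) →+ M) (n : ℕ) :
    BijOn φ (simplexSlice (lexRedundant φ)ᶜ n) (φ '' simplexSlice univ n) := by
  refine ⟨fun x hx => mem_image_of_mem φ ⟨mem_univ x, hx.2⟩, fun x hx y hy hxy => ?_, ?_⟩
  · rcases lt_trichotomy (toLex x) (toLex y) with h | h | h
    · exact absurd ⟨x, h, hx.2.trans hy.2.symm, hxy⟩ hy.1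
    · exact toLex.injective h
    · exact absurd ⟨y, h, hy.2.trans hx.2.symm, hxy.symm⟩ hx.1
  · rintro _ ⟨x, hx, rfl⟩
    have hfin : {y ∈ simplexSlice univ n | φ y = φ x}.Finite :=
      (finite_simplexSlice univ n).sep _
    obtain ⟨y, ⟨hy, hφ⟩, hmin⟩ := exists_min_image _ toLex hfin ⟨x, hx, rfl⟩
    refine ⟨y, ⟨?_, hy.2⟩, hφ⟩
    rintro ⟨z, hlt, hsum, hz⟩
    exact hlt.not_ge (hmin z ⟨⟨mem_univ z, hsum.trans hy.2⟩, hz.trans hφ⟩)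

theorem eventuallyPolynomial_image_simplexSlice [Fintype ι] [AddCommMonoid M]
    (φ : (ι → ℕ) →+ M) :
    EventuallyPolynomial fun n => (φ '' simplexSlice univ n).ncard := by
  let _ : LinearOrder ι := LinearOrder.lift' _ (Fintype.equivFin ι).injective
  refine (eventuallyPolynomial_simplexSlice_of_isUpperSet
    (isUpperSet_lexRedundant φ)).simplexSlice_compl.of_eventually_eq (.of_forall fun n => ?_)
  rw [← (bijOn_simplexSlice_compl_lexRedundant φ n).image_eq,
    (bijOn_simplexSlice_compl_lexRedundant φ n).injOn.ncard_image]

theorem mem_nsmul_iff_exists_multiset [AddCommMonoid M] {s : Set M} {n : ℕ} {a : M} :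
    a ∈ n • s ↔ ∃ l : Multiset M, l.card = n ∧ (∀ x ∈ l, x ∈ s) ∧ l.sum = a := by
  constructor
  · intro ha
    obtain ⟨f, hf, rfl⟩ := mem_nsmul_iff_sum.mp ha
    exact ⟨Finset.univ.val.map f, by simp, by simpa using hf, rfl⟩
  · rintro ⟨l, rfl, hl, rfl⟩
    simpa using multiset_sum_mem_multiset_sum l (fun _ => s) id hl

theorem nsmul_eq_image_simplexSlice [AddCommMonoid M] (Ω : Set M) [Fintype Ω] (n : ℕ) :
    n • Ω = Fintype.linearCombination ℕ (Subtype.val : Ω → M) '' simplexSlice univ n := by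
  classical
  ext a
  constructor
  · intro ha
    obtain ⟨f, hf, rfl⟩ := mem_nsmul_iff_sum.mp ha
    refine ⟨∑ i, Pi.single ⟨f i, hf i⟩ 1, ⟨mem_univ _, ?_⟩, ?_⟩
    · simp_rw [Finset.sum_apply]
      rw [Finset.sum_comm]
      simp
    · simp only [map_sum, Fintype.linearCombination_apply_single, one_smul]
  · rintro ⟨x, ⟨-, rfl⟩, rfl⟩
    rw [Fintype.linearCombination_apply, ← Finset.sum_nsmul_assoc]
    exact finsetSum_mem_finsetSum _ _ _ fun ω _ => Set.nsmul_mem_nsmul ω.2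

theorem eventuallyPolynomial_ncard_nsmul [AddCommMonoid M] {Ω : Set M} (hΩ : Ω.Finite) :
    EventuallyPolynomial fun n => (n • Ω).ncard := by
  have := hΩ.fintype
  refine (eventuallyPolynomial_image_simplexSlice
    (Fintype.linearCombination ℕ (Subtype.val : Ω → M)).toAddMonoidHom).of_eventually_eq
      (.of_forall fun n => ?_)
  rw [nsmul_eq_image_simplexSlice Ω n]
  rfl

theorem tendsto_ncard_div_ncard_nsmul [AddCancelCommMonoid M] {Ω : Set M} (hΩ : Ω.Finite)
    (hne : Ω.Nonempty) {P : ℕ → Set M} {v : M} {m : ℕ} (hP : ∀ n, P n ⊆ n • Ω)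
    (hv : ∀ n, v +ᵥ n • Ω ⊆ P (n + m)) :
    Tendsto (fun n => ((P n).ncard : ℝ) / (n • Ω).ncard) atTop (nhds 1) := by
  have hfin (n : ℕ) : (n • Ω).Finite := by
    induction n with
    | zero => simp
    | succ n ih => rw [succ_nsmul]; exact ih.add hΩ
  have hpos (n : ℕ) : 0 < (n • Ω).ncard := (ncard_pos (hfin n)).mpr hne.nsmul
  refine (tendsto_add_atTop_iff_nat m).mp <|
    tendsto_of_tendsto_of_tendsto_of_le_of_le
      ((eventuallyPolynomial_ncard_nsmul hΩ).tendsto_div_shift hpos m) tendsto_const_nhds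
      (fun n => ?_) fun n => ?_
  · have h : (n • Ω).ncard ≤ (P (n + m)).ncard := by
      rw [← ncard_image_of_injective (n • Ω) (add_right_injective v)]
      exact ncard_le_ncard (hv n) ((hfin _).subset (hP _))
    dsimp only
    gcongr
  · exact div_le_one_of_le₀ (Nat.cast_le.mpr (ncard_le_ncard (hP _) (hfin _))) (Nat.cast_nonneg _)

end Khovanskii

section SetsOfLengths

open Set
open scoped Pointwise

variable {G : Type*} [AddCommGroup G]

theorem mem_LSet_iff_mem_nsmul {A : Multiset G} {k : ℕ} :
    k ∈ LSet A ↔ A ∈ k • {U : Multiset G | IsMinZS U} :=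
  mem_nsmul_iff_exists_multiset.symm

theorem IsMinZS.one_mem_LSet {U : Multiset G} (hU : IsMinZS U) : 1 ∈ LSet U := by
  rwa [mem_LSet_iff_mem_nsmul, one_nsmul]

theorem add_mem_LSet_add {A B : Multiset G} {j k : ℕ} (hj : j ∈ LSet A) (hk : k ∈ LSet B) :
    j + k ∈ LSet (A + B) := by
  rw [mem_LSet_iff_mem_nsmul] at hj hk ⊢
  rw [add_nsmul]
  exact Set.add_mem_add hj hk

theorem LSet_add_LSet_subset (A B : Multiset G) : LSet A + LSet B ⊆ LSet (A + B) := by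
  rintro _ ⟨j, hj, k, hk, rfl⟩
  exact add_mem_LSet_add hj hk

theorem zero_mem_LSet_zero : 0 ∈ LSet (0 : Multiset G) :=
  ⟨0, by simp⟩

theorem nsmul_LSet_subset (A : Multiset G) (r : ℕ) : r • LSet A ⊆ LSet (r • A) := by
  induction r with
  | zero => simpa using zero_mem_LSet_zero
  | succ r ih =>
    rw [succ_nsmul, succ_nsmul]
    exact (add_subset_add_right ih).trans (LSet_add_LSet_subset _ _)

theorem sum_eq_zero_of_mem_LSet {A : Multiset G} {k : ℕ} (hk : k ∈ LSet A) : A.sum = 0 := by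
  obtain ⟨l, -, hl, rfl⟩ := hk
  rw [← Multiset.coe_sumAddMonoidHom, map_multiset_sum]
  refine Multiset.sum_eq_zero fun x hx => ?_
  obtain ⟨U, hU, rfl⟩ := Multiset.mem_map.mp hx
  exact (hl U hU).2.1

theorem mul_le_map_of_mem_LSet {A : Multiset G} {k c : ℕ} (f : Multiset G →+ ℕ)
    (hf : ∀ U, IsMinZS U → c ≤ f U) (hk : k ∈ LSet A) : k * c ≤ f A := by
  obtain ⟨l, rfl, hl, rfl⟩ := hk
  simpa [map_multiset_sum] using
    Multiset.card_nsmul_le_sum (s := l.map f) (a := c) (by simpa using fun U hU => hf U (hl U hU))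

theorem map_le_mul_of_mem_LSet {A : Multiset G} {k c : ℕ} (f : Multiset G →+ ℕ)
    (hf : ∀ U, IsMinZS U → f U ≤ c) (hk : k ∈ LSet A) : f A ≤ k * c := by
  obtain ⟨l, rfl, hl, rfl⟩ := hk
  simpa [map_multiset_sum] using
    Multiset.sum_le_card_nsmul (l.map f) c (by simpa using fun U hU => hf U (hl U hU))

theorem wellQuasiOrderedLE_multiset (α : Type*) [Finite α] :
    WellQuasiOrderedLE (Multiset α) := by
  classical exact (Finsupp.orderIsoMultiset (ι := α)).wellQuasiOrderedLE_iff.mp inferInstance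

theorem finite_setOf_isMinZS [Finite G] : {U : Multiset G | IsMinZS U}.Finite := by
  have := wellQuasiOrderedLE_multiset G
  exact WellQuasiOrderedLE.finite_of_isAntichain
    fun U hU V hV hne hle => hne (hV.2.2 U hle hU.1 hU.2.1)

theorem IsMinZS.card_le_DavC [Finite G] {U : Multiset G} (hU : IsMinZS U) : U.card ≤ DavC G :=
  le_csSup (finite_setOf_isMinZS.image Multiset.card).bddAbove ⟨U, hU, rfl⟩

theorem IsMinZS.eq_singleton_zero_s18 {U : Multiset G} (hU : IsMinZS U) (h0 : (0 : G) ∈ U) :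
    U = {0} :=
  (hU.2.2 {0} (by simpa using h0) (by simp) (by simp)).symm

theorem two_le_card_of_sum_eq_zero {M : Type*} [AddCommMonoid M] {U : Multiset M} (hU : U ≠ 0)
    (hsum : U.sum = 0) (h0 : (0 : M) ∉ U) : 2 ≤ U.card := by
  by_contra! hcard
  have h1 : U.card = 1 := by
    have := Multiset.card_pos.mpr hU
    omega
  obtain ⟨g, rfl⟩ := Multiset.card_eq_one.mp h1
  rw [Multiset.sum_singleton] at hsum
  exact h0 (by simp [hsum])

theorem isMinZS_of_card_le_three {U : Multiset G} (hU : U ≠ 0) (hsum : U.sum = 0)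
    (h0 : (0 : G) ∉ U) (hcard : U.card ≤ 3) : IsMinZS U := by
  refine ⟨hU, hsum, fun V hV hV0 hVsum => ?_⟩
  obtain ⟨W, rfl⟩ := exists_add_of_le hV
  rw [Multiset.sum_add, hVsum, zero_add] at hsum
  rw [Multiset.mem_add, not_or] at h0
  have hVcard := two_le_card_of_sum_eq_zero hV0 hVsum h0.1
  by_contra hW
  have hWcard := two_le_card_of_sum_eq_zero (by simpa using hW) hsum h0.2
  rw [Multiset.card_add] at hcard
  omega

theorem two_mul_le_card_add_count_zero [DecidableEq G] {A : Multiset G} {k : ℕ}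
    (hk : k ∈ LSet A) : 2 * k ≤ A.card + A.count 0 := by
  rw [mul_comm]
  refine mul_le_map_of_mem_LSet (Multiset.cardHom + Multiset.countAddMonoidHom 0)
    (fun U hU => ?_) hk
  by_cases h0 : (0 : G) ∈ U
  · simp [hU.eq_singleton_zero_s18 h0]
  · exact (two_le_card_of_sum_eq_zero hU.1 hU.2.1 h0).trans (Nat.le_add_right _ _)

theorem card_add_two_mul_count_zero_le [DecidableEq G] [Finite G] (hD : 3 ≤ DavC G)
    {A : Multiset G} {k : ℕ} (hk : k ∈ LSet A) :
    A.card + 2 * A.count 0 ≤ DavC G * k := by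
  rw [mul_comm (DavC G)]
  refine map_le_mul_of_mem_LSet (Multiset.cardHom + 2 • Multiset.countAddMonoidHom 0)
    (fun U hU => ?_) hk
  by_cases h0 : (0 : G) ∈ U
  · simpa [hU.eq_singleton_zero_s18 h0] using hD
  · simpa [h0] using hU.card_le_DavC

theorem bddAbove_LSet (A : Multiset G) : BddAbove (LSet A) := by
  classical
  refine ⟨A.card + A.count 0, fun k hk => ?_⟩
  have := two_mul_le_card_add_count_zero hk
  omega

theorem isLeast_and_isGreatest_LSet [Finite G] (hD : 3 ≤ DavC G) {A : Multiset G} {p q : ℕ}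
    (hp : p ∈ LSet A) (hq : q ∈ LSet A) (hAp : A.card = DavC G * p) (hAq : A.card = 2 * q) :
    IsLeast (LSet A) p ∧ IsGreatest (LSet A) q := by
  classical
  refine ⟨⟨hp, fun k hk => ?_⟩, hq, fun k hk => ?_⟩
  · refine Nat.le_of_mul_le_mul_left ?_ (by omega : 0 < DavC G)
    have := card_add_two_mul_count_zero_le hD hk
    omega
  · have := card_add_two_mul_count_zero_le hD hp
    have := two_mul_le_card_add_count_zero hk
    omega

theorem mem_Brho_of_card_eq [Finite G] (hD : 3 ≤ DavC G) {A : Multiset G} {p q : ℕ}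
    (hp : p ∈ LSet A) (hq : q ∈ LSet A) (hAp : A.card = DavC G * p) (hAq : A.card = 2 * q) :
    A ∈ Brho G := by
  refine ⟨sum_eq_zero_of_mem_LSet hp, or_iff_not_imp_left.mpr fun hA => ?_⟩
  obtain ⟨hinf, hsup⟩ := isLeast_and_isGreatest_LSet hD hp hq hAp hAq
  have hp0 : (p : ℚ) ≠ 0 := by
    intro hp0
    rw [Nat.cast_eq_zero.mp hp0, mul_zero, Multiset.card_eq_zero] at hAp
    exact hA hAp
  rw [rhoSet, hinf.csInf_eq, hsup.csSup_eq, div_eq_div_iff hp0 two_ne_zero]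
  exact_mod_cast (mul_comm q 2).trans (hAq.symm.trans hAp)

theorem exists_card_eq_of_mem_Brho [Finite G] (hD : 3 ≤ DavC G) {A : Multiset G}
    (hA : A ∈ Brho G) :
    ∃ p ∈ LSet A, ∃ q ∈ LSet A, A.card = DavC G * p ∧ A.card = 2 * q := by
  classical
  obtain ⟨-, rfl | hρ⟩ := hA
  · exact ⟨0, zero_mem_LSet_zero, 0, zero_mem_LSet_zero, by simp⟩
  have hinf0 : sInf (LSet A) ≠ 0 := by
    intro h
    rw [rhoSet, h, Nat.cast_zero, div_zero, eq_comm, div_eq_zero_iff] at hρ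
    exact hρ.elim (Nat.cast_ne_zero.mpr (by omega)) two_ne_zero
  have hne : (LSet A).Nonempty := Nat.nonempty_of_sInf_eq_succ (Nat.succ_pred hinf0).symm
  have hratio : 2 * sSup (LSet A) = DavC G * sInf (LSet A) := by
    rw [rhoSet, div_eq_div_iff (Nat.cast_ne_zero.mpr hinf0) two_ne_zero] at hρ
    rw [mul_comm]
    exact_mod_cast hρ
  have hp := Nat.sInf_mem hne
  have hq := Nat.sSup_mem hne (bddAbove_LSet A)
  have := card_add_two_mul_count_zero_le hD hp
  have := two_mul_le_card_add_count_zero hq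
  exact ⟨_, hp, _, hq, by omega, by omega⟩

theorem mem_Brho_iff [Finite G] (hD : 3 ≤ DavC G) {A : Multiset G} :
    A ∈ Brho G ↔ ∃ p ∈ LSet A, ∃ q ∈ LSet A, A.card = DavC G * p ∧ A.card = 2 * q :=
  ⟨exists_card_eq_of_mem_Brho hD,
    fun ⟨_, hp, _, hq, hAp, hAq⟩ => mem_Brho_of_card_eq hD hp hq hAp hAq⟩

theorem isIntervalSet_LSet_of_Icc_subset [Finite G] (hD : 3 ≤ DavC G) {A : Multiset G} {p q : ℕ}
    (hpq : p ≤ q) (h : Icc p q ⊆ LSet A) (hAp : A.card = DavC G * p) (hAq : A.card = 2 * q) :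
    IsIntervalSet (LSet A) := by
  obtain ⟨hinf, hsup⟩ := isLeast_and_isGreatest_LSet hD (h (left_mem_Icc.mpr hpq))
    (h (right_mem_Icc.mpr hpq)) hAp hAq
  refine ⟨hinf.nonempty, ?_⟩
  rw [hinf.csInf_eq, hsup.csSup_eq]
  exact Subset.antisymm (fun k hk => ⟨hinf.2 hk, hsup.2 hk⟩) h

end SetsOfLengths

section MaximalElasticity

open Set
open scoped Pointwise

variable {G : Type*} [AddCommGroup G]

theorem mem_LSetB_iff_mem_nsmul {A : Multiset G} {k : ℕ} :
    k ∈ LSetB A ↔ A ∈ k • {U : Multiset G | IsAtomBrho U} :=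
  mem_nsmul_iff_exists_multiset.symm

theorem add_mem_LSetB_add {A B : Multiset G} {j k : ℕ} (hj : j ∈ LSetB A) (hk : k ∈ LSetB B) :
    j + k ∈ LSetB (A + B) := by
  rw [mem_LSetB_iff_mem_nsmul] at hj hk ⊢
  rw [add_nsmul]
  exact Set.add_mem_add hj hk

/-- `Brho G` as a submonoid of the free abelian monoid `Multiset G`. -/
def brhoSubmonoid [Finite G] (hD : 3 ≤ DavC G) : AddSubmonoid (Multiset G) where
  carrier := Brho G
  zero_mem' := ⟨Multiset.sum_zero, Or.inl rfl⟩
  add_mem' {A B} hA hB := by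
    obtain ⟨p, hp, q, hq, hAp, hAq⟩ := (mem_Brho_iff hD).mp hA
    obtain ⟨p', hp', q', hq', hBp, hBq⟩ := (mem_Brho_iff hD).mp hB
    exact mem_Brho_of_card_eq hD (add_mem_LSet_add hp hp') (add_mem_LSet_add hq hq')
      (by rw [Multiset.card_add, hAp, hBp, mul_add]) (by rw [Multiset.card_add, hAq, hBq, mul_add])

variable (G) in
/-- The factorization homomorphism of the monoid of zero-sum sequences, from the free monoid on
the minimal zero-sum sequences. -/
def factorizationHom : Multiset {U : Multiset G // IsMinZS U} →+ Multiset G :=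
  Multiset.sumAddMonoidHom.comp (Multiset.mapAddMonoidHom Subtype.val)

theorem mem_LSet_iff_exists_factorizationHom {A : Multiset G} {k : ℕ} :
    k ∈ LSet A ↔ ∃ l, l.card = k ∧ factorizationHom G l = A := by
  constructor
  · rintro ⟨l, rfl, hl, rfl⟩
    lift l to Multiset {U : Multiset G // IsMinZS U} using hl
    exact ⟨l, by simp, rfl⟩
  · rintro ⟨l, rfl, rfl⟩
    exact ⟨l.map Subtype.val, by simp, by simp +contextual, rfl⟩

/-- Encodes `mem_Brho_iff`: a pair `(l, l')` of factorizations lies in the locus where the two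
homomorphisms below agree iff both factor the same sequence, the number of factors in `l` is
the smallest conceivable, and the number of factors in `l'` the largest. -/
theorem fg_brhoSubmonoid [Finite G] (hD : 3 ≤ DavC G) : (brhoSubmonoid hD).FG := by
  have : Finite {U : Multiset G // IsMinZS U} := finite_setOf_isMinZS.to_subtype
  have := wellQuasiOrderedLE_multiset {U : Multiset G // IsMinZS U}
  let fst := AddMonoidHom.fst (Multiset {U : Multiset G // IsMinZS U})
    (Multiset {U : Multiset G // IsMinZS U})
  let snd := AddMonoidHom.snd (Multiset {U : Multiset G // IsMinZS U})
    (Multiset {U : Multiset G // IsMinZS U})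
  let φ := (factorizationHom G).comp fst
  let cardφ := Multiset.cardHom.comp φ
  let f := φ.prod (cardφ.prod cardφ)
  let g := ((factorizationHom G).comp snd).prod
    ((DavC G • Multiset.cardHom.comp fst).prod (2 • Multiset.cardHom.comp snd))
  suffices brhoSubmonoid hD = (f.eqLocusM g).map φ from
    this ▸ (AddSubmonoid.fg_eqLocusM f g).map φ
  ext A
  change A ∈ Brho G ↔ _
  simp only [mem_Brho_iff hD, mem_LSet_iff_exists_factorizationHom]
  constructor
  · rintro ⟨_, ⟨l, rfl, rfl⟩, _, ⟨l', rfl, hl'⟩, hp, hq⟩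
    exact ⟨(l, l'), Prod.ext hl'.symm (Prod.ext hp hq), rfl⟩
  · rintro ⟨⟨l, l'⟩, h, rfl⟩
    obtain ⟨hl', hp, hq⟩ := Prod.ext_iff.mp h |>.imp_right Prod.ext_iff.mp
    exact ⟨_, ⟨l, rfl, rfl⟩, _, ⟨l', rfl, hl'.symm⟩, hp, hq⟩

instance [Finite G] (hD : 3 ≤ DavC G) : AddCancelCommMonoid (brhoSubmonoid hD) where
  __ := (inferInstance : AddCommMonoid (brhoSubmonoid hD))
  add_left_cancel := add_right_injective

instance [Finite G] (hD : 3 ≤ DavC G) : Subsingleton (AddUnits (brhoSubmonoid hD)) :=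
  (AddUnits.map_injective (f := (brhoSubmonoid hD).subtype) Subtype.val_injective).subsingleton

theorem isAtomBrho_coe_iff [Finite G] (hD : 3 ≤ DavC G) {U : brhoSubmonoid hD} :
    IsAtomBrho (U : Multiset G) ↔ AddIrreducible U := by
  simp only [addIrreducible_iff, isAddUnit_iff_eq_zero]
  exact ⟨fun hU => ⟨fun h => hU.2.1 (congrArg Subtype.val h), fun V W h =>
    (hU.2.2 V V.2 W W.2 (congrArg Subtype.val h)).imp Subtype.ext Subtype.ext⟩,
    fun hU => ⟨U.2, fun h => hU.1 (Subtype.ext h), fun V hV W hW h =>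
    (@hU.2 ⟨V, hV⟩ ⟨W, hW⟩ (Subtype.ext h)).imp (congrArg Subtype.val) (congrArg Subtype.val)⟩⟩

theorem finite_setOf_isAtomBrho [Finite G] (hD : 3 ≤ DavC G) :
    {U : Multiset G | IsAtomBrho U}.Finite := by
  have := (AddMonoid.fg_iff_addSubmonoid_fg _).mpr (fg_brhoSubmonoid hD)
  refine ((finite_addIrreducible (M := brhoSubmonoid hD)).image Subtype.val).subset fun U hU => ?_
  exact ⟨⟨U, hU.1⟩, (isAtomBrho_coe_iff hD).mp hU, rfl⟩

theorem closure_setOf_isAtomBrho [Finite G] (hD : 3 ≤ DavC G) :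
    AddSubmonoid.closure {U : Multiset G | IsAtomBrho U} = brhoSubmonoid hD := by
  have := (AddMonoid.fg_iff_addSubmonoid_fg _).mpr (fg_brhoSubmonoid hD)
  have himage : {U : Multiset G | IsAtomBrho U} =
      (brhoSubmonoid hD).subtype '' {U | AddIrreducible U} := by
    ext U
    exact ⟨fun hU => ⟨⟨U, hU.1⟩, (isAtomBrho_coe_iff hD).mp hU, rfl⟩,
      fun ⟨V, hV, hVU⟩ => hVU ▸ (isAtomBrho_coe_iff hD).mpr hV⟩
  rw [himage, ← AddMonoidHom.map_mclosure,
    AddSubmonoid.closure_addIrreducible (M := brhoSubmonoid hD), ← AddMonoidHom.mrange_eq_map,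
    AddSubmonoid.mrange_subtype]

theorem mem_Brho_iff_nonempty_LSetB [Finite G] (hD : 3 ≤ DavC G) {A : Multiset G} :
    A ∈ Brho G ↔ (LSetB A).Nonempty := by
  change A ∈ brhoSubmonoid hD ↔ _
  rw [← closure_setOf_isAtomBrho hD]
  constructor
  · intro hA
    obtain ⟨l, hl, rfl⟩ := AddSubmonoid.exists_multiset_of_mem_closure hA
    exact ⟨l.card, l, rfl, hl, rfl⟩
  · rintro ⟨_, l, -, hl, rfl⟩
    exact multiset_sum_mem l fun U hU => AddSubmonoid.subset_closure (hl U hU)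

theorem setOf_mem_Brho_and_mem_LSetB [Finite G] (hD : 3 ≤ DavC G) (n : ℕ) :
    {A : Multiset G | A ∈ Brho G ∧ n ∈ LSetB A} = n • {U : Multiset G | IsAtomBrho U} := by
  ext A
  rw [← mem_LSetB_iff_mem_nsmul]
  exact and_iff_right_of_imp fun hA => (mem_Brho_iff_nonempty_LSetB hD).mpr ⟨n, hA⟩

theorem nonempty_setOf_isAtomBrho [Finite G] (hD : 3 ≤ DavC G) {A : Multiset G} (hA : A ∈ Brho G)
    (hA0 : A ≠ 0) : {U : Multiset G | IsAtomBrho U}.Nonempty := by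
  obtain ⟨_, l, -, hl, rfl⟩ := (mem_Brho_iff_nonempty_LSetB hD).mp hA
  obtain ⟨U, hU⟩ := Multiset.exists_mem_of_ne_zero (by rintro rfl; exact hA0 rfl : l ≠ 0)
  exact ⟨U, hl U hU⟩

end MaximalElasticity

section PropertyP

open Set
open scoped Pointwise

theorem Icc_add_subset_add {S T : Set ℕ} {p q m M : ℕ} (hT : Icc p q ⊆ T) (hm : m ∈ S)
    (hM : M ∈ S) (hgap : M + p ≤ q + m + 1) : Icc (p + m) (q + M) ⊆ T + S := by
  rintro k ⟨hpk, hkq⟩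
  obtain hk | hk := le_or_gt k (q + m)
  · exact ⟨k - m, hT ⟨by omega, by omega⟩, m, hm, by dsimp only; omega⟩
  · exact ⟨k - M, hT ⟨by omega, by omega⟩, M, hM, by dsimp only; omega⟩

theorem Icc_add_mul_subset_add_nsmul {S T : Set ℕ} {p q m M : ℕ} (hT : Icc p q ⊆ T)
    (hm : m ∈ S) (hM : M ∈ S) (hmM : m ≤ M) (hgap : M + p ≤ q + m + 1) (r : ℕ) :
    Icc (p + r * m) (q + r * M) ⊆ T + r • S := by
  induction r with
  | zero => simpa using hT
  | succ r ih =>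
    have hmul : r * m ≤ r * M := Nat.mul_le_mul_left r hmM
    rw [succ_nsmul, ← add_assoc, add_one_mul, add_one_mul, ← add_assoc, ← add_assoc]
    exact Icc_add_subset_add ih hm hM (by omega)

theorem Icc_mul_subset_nsmul {S : Set ℕ} {m : ℕ} (hm : m ∈ S) (hm' : m + 1 ∈ S) (r : ℕ) :
    Icc (r * m) (r * (m + 1)) ⊆ r • S := by
  simpa using Icc_add_mul_subset_add_nsmul (T := {0}) (p := 0) (q := 0) (by simp) hm hm'
    (Nat.le_succ m) (by omega) r

/-- Adding `r` copies of `{m, M + 1}` to the runs `[r * m, r * (m + 1)]` and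
`[r * M, r * (M + 1)]` inside `r • S` leaves no gaps, as `r` is at least `M - m`. -/
theorem Icc_two_mul_mul_subset_nsmul {S : Set ℕ} {m M r : ℕ} (hm : m ∈ S) (hm' : m + 1 ∈ S)
    (hM : M ∈ S) (hM' : M + 1 ∈ S) (hmM : m ≤ M) (hr : M ≤ m + r) :
    Icc (2 * r * m) (2 * r * (M + 1)) ⊆ (2 * r) • S := by
  have hlow := Icc_add_mul_subset_add_nsmul (Icc_mul_subset_nsmul hm hm' r) hm hM' (by omega)
    (by rw [mul_add]; omega) r
  have hhigh := Icc_add_mul_subset_add_nsmul (Icc_mul_subset_nsmul hM hM' r) hm hM' (by omega)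
    (by rw [mul_add]; omega) r
  rw [← add_nsmul, ← two_mul r] at hlow hhigh
  rintro k ⟨hk, hk'⟩
  obtain h | h := le_total k (r * (m + 1) + r * (M + 1))
  · exact hlow ⟨by linarith, h⟩
  · exact hhigh ⟨by linarith, by linarith⟩

/-- Zero-sum free sequences: those without a nonempty zero-sum subsequence. Removing one element
from a minimal zero-sum sequence gives a zero-sum free one. -/
def IsZeroSumFree {M : Type*} [AddCommMonoid M] (S : Multiset M) : Prop :=
  ∀ V ≤ S, V.sum = 0 → V = 0

theorem IsZeroSumFree.mono {M : Type*} [AddCommMonoid M] {S T : Multiset M}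
    (hT : IsZeroSumFree T) (h : S ≤ T) : IsZeroSumFree S :=
  fun V hV => hT V (hV.trans h)

variable {G : Type*} [AddCommGroup G]

theorem isMinZS_cons_iff {a : G} {S : Multiset G} :
    IsMinZS (a ::ₘ S) ↔ a + S.sum = 0 ∧ IsZeroSumFree S := by
  rw [← Multiset.sum_cons]
  refine ⟨fun h => ⟨h.2.1, fun V hV hVsum => ?_⟩,
    fun ⟨hsum, hfree⟩ => ⟨Multiset.cons_ne_zero, hsum, fun V hV hV0 hVsum => ?_⟩⟩
  · by_contra hV0
    have hle := h.2.2 V (hV.trans (Multiset.le_cons_self S a)) hV0 hVsum ▸ hV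
    exact (Multiset.lt_cons_self S a).not_ge hle
  · obtain ⟨W, hW⟩ := exists_add_of_le hV
    have hWsum : W.sum = 0 := by rwa [hW, Multiset.sum_add, hVsum, zero_add] at hsum
    by_cases ha : a ∈ V
    · obtain ⟨V, rfl⟩ := Multiset.exists_cons_of_mem ha
      rw [Multiset.cons_add, Multiset.cons_inj_right] at hW
      rw [hW, hfree W (hW ▸ Multiset.le_add_left W V) hWsum, add_zero]
    · exact absurd (hfree V ((Multiset.le_cons_of_notMem ha).mp hV) hVsum) hV0

theorem IsMinZS.cons_add {g₁ g₂ : G} {T : Multiset G} (h : IsMinZS (g₁ ::ₘ g₂ ::ₘ T)) :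
    IsMinZS ((g₁ + g₂) ::ₘ T) := by
  rw [isMinZS_cons_iff, Multiset.sum_cons, ← add_assoc] at h
  exact isMinZS_cons_iff.mpr (h.imp_right fun h => h.mono (Multiset.le_cons_self T g₂))

theorem IsMinZS.two_mem_LSet_cons_cons {g₁ g₂ : G} {S : Multiset G}
    (h : IsMinZS ((g₁ + g₂) ::ₘ S)) (hnot : ¬ IsMinZS (g₁ ::ₘ g₂ ::ₘ S)) :
    2 ∈ LSet (g₁ ::ₘ g₂ ::ₘ S) := by
  obtain ⟨hsum, hfree⟩ := isMinZS_cons_iff.mp h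
  have hnotfree : ¬ IsZeroSumFree (g₂ ::ₘ S) := fun h' =>
    hnot (isMinZS_cons_iff.mpr ⟨by rwa [Multiset.sum_cons, ← add_assoc], h'⟩)
  unfold IsZeroSumFree at hnotfree
  push Not at hnotfree
  obtain ⟨V, hV, hVsum, hV0⟩ := hnotfree
  have hg₂ : g₂ ∈ V := by
    by_contra hg₂
    exact hV0 (hfree V ((Multiset.le_cons_of_notMem hg₂).mp hV) hVsum)
  obtain ⟨V, rfl⟩ := Multiset.exists_cons_of_mem hg₂
  obtain ⟨W, rfl⟩ := exists_add_of_le ((Multiset.cons_le_cons_iff g₂).mp hV)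
  rw [Multiset.sum_cons] at hVsum
  have hWsum : g₁ + W.sum = 0 := by
    rwa [Multiset.sum_add, add_comm g₁, add_add_add_comm, hVsum, zero_add] at hsum
  have hVmin : IsMinZS (g₂ ::ₘ V) :=
    isMinZS_cons_iff.mpr ⟨hVsum, hfree.mono (Multiset.le_add_right V W)⟩
  have hWmin : IsMinZS (g₁ ::ₘ W) :=
    isMinZS_cons_iff.mpr ⟨hWsum, hfree.mono (Multiset.le_add_left W V)⟩
  rw [← Multiset.cons_add, ← Multiset.add_cons]
  exact add_mem_LSet_add hVmin.one_mem_LSet hWmin.one_mem_LSet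

/-- Move the pair `g₁, g₂` from one sequence to the other and its sum `g₁ + g₂` back: the first
stays minimal, while the second becomes too long to be minimal and splits in two. -/
theorem IsMinZS.three_mem_LSet_add [Finite G] {g₁ g₂ : G} {T S : Multiset G}
    (hT : IsMinZS (g₁ ::ₘ g₂ ::ₘ T)) (hS : IsMinZS ((g₁ + g₂) ::ₘ S))
    (hcard : ((g₁ + g₂) ::ₘ S).card = DavC G) :
    3 ∈ LSet ((g₁ ::ₘ g₂ ::ₘ T) + ((g₁ + g₂) ::ₘ S)) := by
  have hnot : ¬ IsMinZS (g₁ ::ₘ g₂ ::ₘ S) := by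
    intro h
    have := h.card_le_DavC
    simp only [Multiset.card_cons] at this hcard
    omega
  have hswap : (g₁ ::ₘ g₂ ::ₘ T) + ((g₁ + g₂) ::ₘ S) =
      ((g₁ + g₂) ::ₘ T) + (g₁ ::ₘ g₂ ::ₘ S) := by
    simp only [← Multiset.singleton_add]
    abel
  rw [hswap]
  exact add_mem_LSet_add hT.cons_add.one_mem_LSet (hS.two_mem_LSet_cons_cons hnot)

theorem IsMinZS.map {H : Type*} [AddCommGroup H] {U : Multiset G} (hU : IsMinZS U) (e : G ≃+ H) :
    IsMinZS (U.map e) := by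
  refine ⟨by simpa using hU.1, by rw [← map_multiset_sum, hU.2.1, map_zero],
    fun V hV hV0 hVsum => ?_⟩
  have hle : V.map e.symm ≤ U := by simpa using Multiset.map_le_map (f := e.symm) hV
  rw [← hU.2.2 _ hle (by simpa using hV0) (by rw [← map_multiset_sum, hVsum, map_zero])]
  simp

theorem isMinZS_pair_neg {a : G} (ha : a ≠ 0) : IsMinZS {a, -a} :=
  isMinZS_of_card_le_three (by simp) (by simp) (by simp [ha, eq_comm]) (by simp)

theorem card_mem_LSet_add_map_neg {U : Multiset G} (h0 : (0 : G) ∉ U) :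
    U.card ∈ LSet (U + U.map Neg.neg) := by
  induction U using Multiset.induction_on with
  | empty => exact zero_mem_LSet_zero
  | cons a U ih =>
    rw [Multiset.mem_cons, not_or] at h0
    have hpair : (a ::ₘ U) + (a ::ₘ U).map Neg.neg = (U + U.map Neg.neg) + {a, -a} := by
      simp only [Multiset.map_add, Multiset.map_singleton, Multiset.insert_eq_cons,
        ← Multiset.singleton_add]
      abel
    rw [hpair, Multiset.card_cons]
    exact add_mem_LSet_add (ih h0.2) (isMinZS_pair_neg (Ne.symm h0.1)).one_mem_LSet

/-- The triple `g₁ + g₂, -g₁, -g₂` and its negative take the place of three pairs `a, -a`. -/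
theorem card_add_card_add_two_mem_LSet {g₁ g₂ : G} {T S A : Multiset G}
    (hA : A = (g₁ ::ₘ g₂ ::ₘ T) + ((g₁ + g₂) ::ₘ S)) (h0 : (0 : G) ∉ A) :
    T.card + S.card + 2 ∈ LSet (A + A.map Neg.neg) := by
  have htriple : IsMinZS ({g₁ + g₂, -g₁, -g₂} : Multiset G) := by
    have hsum : ({g₁ + g₂, -g₁, -g₂} : Multiset G).sum = 0 := by
      simp only [Multiset.insert_eq_cons, Multiset.sum_cons, Multiset.sum_singleton]
      abel
    refine isMinZS_of_card_le_three (by simp) hsum ?_ (by simp)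
    simp only [hA, Multiset.insert_eq_cons, Multiset.mem_add, Multiset.mem_cons,
      Multiset.mem_singleton, zero_eq_neg, not_or] at h0 ⊢
    exact ⟨h0.2.1, Ne.symm h0.1.1, Ne.symm h0.1.2.1⟩
  have hrest : (0 : G) ∉ T + S := fun h => h0 <| by
    simp only [hA, Multiset.mem_add, Multiset.mem_cons] at h ⊢
    tauto
  have hsplit : A + A.map Neg.neg = ((T + S) + (T + S).map Neg.neg) +
      (({g₁ + g₂, -g₁, -g₂} : Multiset G) +
        ({g₁ + g₂, -g₁, -g₂} : Multiset G).map (AddEquiv.neg G)) := by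
    simp only [hA, AddEquiv.neg_apply, Multiset.insert_eq_cons, Multiset.map_add,
      Multiset.map_singleton, neg_neg, ← Multiset.singleton_add]
    abel
  rw [hsplit, ← Multiset.card_add]
  exact add_mem_LSet_add (card_mem_LSet_add_map_neg hrest)
    (add_mem_LSet_add htriple.one_mem_LSet (htriple.map _).one_mem_LSet)

theorem PropertyP.three_le_DavC (hP : PropertyP G) : 3 ≤ DavC G := by
  obtain ⟨g₁, g₂, U₁, U₂, h₁, h₂, hcard₁, hcard₂, hle, hmem⟩ := hP
  have htwo : 2 ≤ DavC G := hcard₁ ▸ Multiset.card_le_card hle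
  by_contra! hlt
  have hU₁ : {g₁, g₂} = U₁ :=
    Multiset.eq_of_le_of_card_le hle (hcard₁.trans_le (Nat.le_of_lt_succ hlt))
  have hsum : g₁ + g₂ = 0 := by simpa [← hU₁] using h₁.2.1
  rw [h₂.eq_singleton_zero_s18 (hsum ▸ hmem), Multiset.card_singleton] at hcard₂
  omega

theorem PropertyP.exists_subset_LSet [Finite G] (hP : PropertyP G) :
    ∃ V : Multiset G, V.card = 4 * DavC G ∧
      {4, 5, 2 * DavC G - 1, 2 * DavC G} ⊆ LSet V := by
  have hD := hP.three_le_DavC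
  obtain ⟨g₁, g₂, U₁, U₂, h₁, h₂, hcard₁, hcard₂, hle, hmem⟩ := hP
  obtain ⟨T, rfl⟩ := exists_add_of_le hle
  obtain ⟨S, rfl⟩ := Multiset.exists_cons_of_mem hmem
  rw [Multiset.insert_eq_cons, Multiset.cons_add, Multiset.singleton_add] at h₁ hcard₁
  have hne {U : Multiset G} (hU : IsMinZS U) (hcard : U.card = DavC G) : (0 : G) ∉ U := by
    intro h
    rw [hU.eq_singleton_zero_s18 h, Multiset.card_singleton] at hcard
    omega
  have h0 : (0 : G) ∉ (g₁ ::ₘ g₂ ::ₘ T) + ((g₁ + g₂) ::ₘ S) := by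
    rw [Multiset.mem_add, not_or]
    exact ⟨hne h₁ hcard₁, hne h₂ hcard₂⟩
  generalize hA : (g₁ ::ₘ g₂ ::ₘ T) + ((g₁ + g₂) ::ₘ S) = A at h0
  have hAcard : A.card = 2 * DavC G := by
    rw [← hA, Multiset.card_add, hcard₁, hcard₂, two_mul]
  have htwo : 2 ∈ LSet A := hA ▸ add_mem_LSet_add h₁.one_mem_LSet h₂.one_mem_LSet
  have htwo_neg : 2 ∈ LSet (A.map Neg.neg) := by
    rw [← hA, Multiset.map_add]
    exact add_mem_LSet_add (h₁.map (AddEquiv.neg G)).one_mem_LSet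
      (h₂.map (AddEquiv.neg G)).one_mem_LSet
  have hthree : 3 ∈ LSet A := hA ▸ h₁.three_mem_LSet_add h₂ hcard₂
  have hpred : 2 * DavC G - 1 = T.card + S.card + 2 := by
    simp only [Multiset.card_cons] at hcard₁ hcard₂
    omega
  refine ⟨A + A.map Neg.neg, by rw [Multiset.card_add, Multiset.card_map]; omega, ?_⟩
  simp only [insert_subset_iff, singleton_subset_iff]
  exact ⟨add_mem_LSet_add htwo htwo_neg, add_mem_LSet_add hthree htwo_neg,
    hpred ▸ card_add_card_add_two_mem_LSet hA.symm h0, hAcard ▸ card_mem_LSet_add_map_neg h0⟩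

/-- The sequence `X` has maximal elasticity, with all lengths between the extreme ones, and the
extreme lengths differ by at least `K`. As in `mem_Brho_iff`, the two cardinality conditions force
`p` and `q` to be the extreme lengths. -/
def HasIntervalOfLengths (K : ℕ) (X : Multiset G) : Prop :=
  ∃ p q, p + K ≤ q ∧ Icc p q ⊆ LSet X ∧ X.card = DavC G * p ∧ X.card = 2 * q

theorem PropertyP.exists_hasIntervalOfLengths [Finite G] (hP : PropertyP G) (K : ℕ) :
    ∃ X : Multiset G, HasIntervalOfLengths K X := by
  have hD := hP.three_le_DavC
  obtain ⟨V, hVcard, hV⟩ := hP.exists_subset_LSet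
  simp only [insert_subset_iff, singleton_subset_iff] at hV
  obtain ⟨h4, h5, hpred, hmax⟩ := hV
  obtain ⟨M, hM⟩ : ∃ M, 2 * DavC G = M + 1 := ⟨2 * DavC G - 1, by omega⟩
  rw [hM, Nat.add_sub_cancel] at hpred
  rw [hM] at hmax
  have hIcc := Icc_two_mul_mul_subset_nsmul (r := M + K) h4 h5 hpred hmax (by omega) (by omega)
  refine ⟨(2 * (M + K)) • V, _, _, ?_, hIcc.trans (nsmul_LSet_subset V _), ?_, ?_⟩
  · have hlong : 2 * (M + K) * (4 + 1) ≤ 2 * (M + K) * (M + 1) :=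
      Nat.mul_le_mul_left _ (by omega)
    omega
  · rw [Multiset.card_nsmul, hVcard]
    ring
  · rw [Multiset.card_nsmul, hVcard, ← hM]
    ring

theorem HasIntervalOfLengths.mem_Brho [Finite G] (hD : 3 ≤ DavC G) {K : ℕ} {X : Multiset G}
    (hX : HasIntervalOfLengths K X) : X ∈ Brho G := by
  obtain ⟨p, q, hpq, h, hXp, hXq⟩ := hX
  exact mem_Brho_of_card_eq hD (h ⟨le_rfl, by omega⟩) (h ⟨by omega, le_rfl⟩) hXp hXq

theorem HasIntervalOfLengths.isIntervalSet_LSet [Finite G] (hD : 3 ≤ DavC G) {K : ℕ}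
    {X : Multiset G} (hX : HasIntervalOfLengths K X) : IsIntervalSet (LSet X) := by
  obtain ⟨p, q, hpq, h, hXp, hXq⟩ := hX
  exact isIntervalSet_LSet_of_Icc_subset hD (by omega) h hXp hXq

theorem HasIntervalOfLengths.add [Finite G] (hD : 3 ≤ DavC G) {K : ℕ} {X U : Multiset G}
    (hX : HasIntervalOfLengths K X) (hU : U ∈ Brho G) (hUK : U.card ≤ K) :
    HasIntervalOfLengths K (X + U) := by
  obtain ⟨p, q, hpq, h, hXp, hXq⟩ := hX
  obtain ⟨m, hm, M, hM, hUm, hUM⟩ := (mem_Brho_iff hD).mp hU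
  have hmM : m ≤ M := (isLeast_and_isGreatest_LSet hD hm hM hUm hUM).1.2 hM
  refine ⟨p + m, q + M, by omega, (Icc_add_subset_add h hm hM (by omega)).trans
    (LSet_add_LSet_subset X U), ?_, ?_⟩ <;> rw [Multiset.card_add]
  · rw [hXp, hUm, mul_add]
  · rw [hXq, hUM, mul_add]

theorem HasIntervalOfLengths.add_multiset_sum [Finite G] (hD : 3 ≤ DavC G) {K : ℕ}
    {X : Multiset G} (hX : HasIntervalOfLengths K X) {l : Multiset (Multiset G)}
    (hl : ∀ U ∈ l, U ∈ Brho G ∧ U.card ≤ K) : HasIntervalOfLengths K (X + l.sum) := by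
  induction l using Multiset.induction_on generalizing X with
  | empty => simpa using hX
  | cons U l ih =>
    rw [Multiset.forall_mem_cons] at hl
    rw [Multiset.sum_cons, ← add_assoc]
    exact ih (hX.add hD hl.1.1 hl.1.2) hl.2

theorem PropertyP.exists_forall_isIntervalSet_LSet_add [Finite G] (hP : PropertyP G) :
    ∃ X ∈ Brho G, X ≠ 0 ∧ ∀ A ∈ Brho G, IsIntervalSet (LSet (X + A)) := by
  have hD := hP.three_le_DavC
  obtain ⟨K, hK⟩ := ((finite_setOf_isAtomBrho hD).image Multiset.card).bddAbove
  obtain ⟨X, hX⟩ := hP.exists_hasIntervalOfLengths (K + 1)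
  refine ⟨X, hX.mem_Brho hD, ?_, fun A hA => ?_⟩
  · rintro rfl
    obtain ⟨p, q, hpq, -, -, hq⟩ := hX
    rw [Multiset.card_zero] at hq
    omega
  · obtain ⟨_, l, -, hl, rfl⟩ := (mem_Brho_iff_nonempty_LSetB hD).mp hA
    exact (hX.add_multiset_sum hD fun U hU => ⟨(hl U hU).1,
      (hK ⟨U, hl U hU, rfl⟩).trans (Nat.le_succ K)⟩).isIntervalSet_LSet hD

end PropertyP

theorem stmt18 {G : Type*} [AddCommGroup G] [Fintype G] (hcard : 3 ≤ Fintype.card G)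
    (hP : PropertyP G) :
    (∀ n : ℕ,
      {A : Multiset G | A ∈ Brho G ∧ IsIntervalSet (LSet A) ∧ n ∈ LSetB A} ⊆
      {A : Multiset G | A ∈ Brho G ∧ n ∈ LSetB A}) ∧
    Filter.Tendsto
      (fun n : ℕ =>
        (({A : Multiset G | A ∈ Brho G ∧ IsIntervalSet (LSet A) ∧ n ∈ LSetB A}.ncard : ℝ) /
         ({A : Multiset G | A ∈ Brho G ∧ n ∈ LSetB A}.ncard : ℝ)))
      Filter.atTop (nhds 1) := by
  refine ⟨fun n A hA => ⟨hA.1, hA.2.2⟩, ?_⟩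
  have hD := hP.three_le_DavC
  obtain ⟨X, hX, hX0, hinterval⟩ := hP.exists_forall_isIntervalSet_LSet_add
  obtain ⟨m, hm⟩ := (mem_Brho_iff_nonempty_LSetB hD).mp hX
  simp only [setOf_mem_Brho_and_mem_LSetB hD]
  refine tendsto_ncard_div_ncard_nsmul (finite_setOf_isAtomBrho hD)
    (nonempty_setOf_isAtomBrho hD hX hX0) (v := X) (m := m) (fun n A hA => ?_) fun n => ?_
  · exact mem_LSetB_iff_mem_nsmul.mp hA.2.2
  · rintro _ ⟨A, hA, rfl⟩
    rw [← setOf_mem_Brho_and_mem_LSetB hD] at hA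
    have hXA : n + m ∈ LSetB (X + A) := add_comm m n ▸ add_mem_LSetB_add hm hA.2
    exact ⟨(mem_Brho_iff_nonempty_LSetB hD).mpr ⟨_, hXA⟩, hinterval A hA.1, hXA⟩
end
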